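/- Let C⁰([0,1],0) be the closed subspace of the Banach space C([0,1]) (sup norm) consisting of continuous functions φ with ∫_0^1 φ = 0. For φ ∈ C⁰([0,1],0) and N ∈ C([0,1]), let Δφ be the unique C¹ function on [0,1] with ∫_0^1 Δφ = 0 and derivative D(Δφ) = (1/2)φ² + φN − ∫_0^1 ((1/2)φ² + φN). Then the map 𝒯 : C⁰([0,1],0) × C([0,1]) → C⁰([0,1],0), 𝒯(φ,N) = φ − Δφ, is of class C¹ (Fréchet differentiable with continuous derivative), its differential at (0,0) is (δφ, δN) ↦ δφ, and consequently for every N sufficiently close to 0 in C([0,1]) the map φ ↦ 𝒯(φ,N) is a C¹ diffeomorphism from a neighborhood of 0 in C⁰([0,1],0) onto another neighborhood of 0 in C⁰([0,1],0). -/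

import Mathlib

open Set Filter Topology

noncomputable section

/-- the unit interval `[0,1]`, as a compact topological space. -/
abbrev UI : Type := Set.Icc (0:ℝ) 1

/-- the extension of a continuous function on `[0,1]` to `ℝ` by projection. -/
def ext01 (f : C(UI, ℝ)) : ℝ → ℝ := fun t => f (Set.projIcc 0 1 zero_le_one t)

lemma ext01_cont (f : C(UI, ℝ)) : Continuous (ext01 f) :=
  f.continuous.comp continuous_projIcc

/-- the closed subspace `C⁰([0,1],0)` of continuous functions with zero mean. -/
def Cmean0 : Submodule ℝ C(UI, ℝ) where
  carrier := {f | (∫ t in (0:ℝ)..1, ext01 f t) = 0}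
  add_mem' := by
    intro a b ha hb
    simp only [Set.mem_setOf_eq] at *
    have h : Set.EqOn (ext01 (a + b)) (fun t => ext01 a t + ext01 b t) (Set.uIcc 0 1) := by
      intro t _; simp [ext01]
    rw [intervalIntegral.integral_congr h,
      intervalIntegral.integral_add ((ext01_cont a).intervalIntegrable _ _)
        ((ext01_cont b).intervalIntegrable _ _), ha, hb, add_zero]
  zero_mem' := by
    have h : Set.EqOn (ext01 0) (fun _ => (0:ℝ)) (Set.uIcc 0 1) := by
      intro t _; simp [ext01]
    simp [Set.mem_setOf_eq, intervalIntegral.integral_congr h]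
  smul_mem' := by
    intro c f hf
    simp only [Set.mem_setOf_eq] at *
    have h : Set.EqOn (ext01 (c • f)) (fun t => c * ext01 f t) (Set.uIcc 0 1) := by
      intro t _; simp [ext01]
    rw [intervalIntegral.integral_congr h, intervalIntegral.integral_const_mul, hf, mul_zero]

/-- `(1/2)φ² + φN`, extended to `ℝ`. -/
def gfun (φ N : C(UI, ℝ)) : ℝ → ℝ := fun t =>
  (1/2) * (ext01 φ t) ^ 2 + ext01 φ t * ext01 N t

/-- the primitive `x ↦ ∫_0^x ((1/2)φ²+φN)(y) dy - x ∫_0^1 ((1/2)φ²+φN)(y) dy`. -/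
def primG (φ N : C(UI, ℝ)) : ℝ → ℝ := fun x =>
  (∫ t in (0:ℝ)..x, gfun φ N t) - x * ∫ t in (0:ℝ)..1, gfun φ N t

/-- `Δφ`: the unique `C¹` function with `∫_0^1 Δφ = 0` and
`D(Δφ) = (1/2)φ² + φN - ∫_0^1 ((1/2)φ² + φN)`. -/
def DeltaF (φ N : C(UI, ℝ)) : ℝ → ℝ := fun x =>
  primG φ N x - ∫ s in (0:ℝ)..1, primG φ N s

lemma ext01_add (a b : C(UI, ℝ)) : ext01 (a + b) = fun t => ext01 a t + ext01 b t := rfl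

lemma ext01_smul (c : ℝ) (a : C(UI, ℝ)) : ext01 (c • a) = fun t => c * ext01 a t := rfl

lemma ext01_le (a : C(UI, ℝ)) (t : ℝ) : ‖ext01 a t‖ ≤ ‖a‖ := a.norm_coe_le_norm _

lemma ext01_ii (a : C(UI, ℝ)) (x y : ℝ) :
    IntervalIntegrable (ext01 a) MeasureTheory.volume x y :=
  (ext01_cont a).intervalIntegrable _ _

/-- integral up to `x` as a linear functional. -/
def intL (x : ℝ) : C(UI, ℝ) →ₗ[ℝ] ℝ where
  toFun a := ∫ t in (0:ℝ)..x, ext01 a t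
  map_add' a b := by
    rw [ext01_add, intervalIntegral.integral_add (ext01_ii a _ _) (ext01_ii b _ _)]
  map_smul' c a := by
    rw [ext01_smul, intervalIntegral.integral_const_mul]; rfl

lemma intL_apply (x : ℝ) (a : C(UI, ℝ)) : intL x a = ∫ t in (0:ℝ)..x, ext01 a t := rfl

lemma intL_le (x : ℝ) (hx : x ∈ Set.Icc (0:ℝ) 1) (a : C(UI, ℝ)) : ‖intL x a‖ ≤ 1 * ‖a‖ := by
  have h := intervalIntegral.norm_integral_le_of_norm_le_const (a := (0:ℝ)) (b := x)
    (f := ext01 a) (C := ‖a‖) (fun t _ => ext01_le a t)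
  rw [intL_apply]
  refine h.trans ?_
  rw [sub_zero, abs_of_nonneg hx.1, mul_comm]
  exact mul_le_mul_of_nonneg_right hx.2 (norm_nonneg _)

lemma intL_const (c : ℝ) : intL 1 (ContinuousMap.const UI c) = c := by
  simp [intL_apply, ext01]

/-- the total integral, as a continuous functional. -/
def intC : C(UI, ℝ) →L[ℝ] ℝ := (intL 1).mkContinuous 1 (intL_le 1 (by simp))

lemma intC_apply (a : C(UI, ℝ)) : intC a = intL 1 a := rfl

lemma mem_Cmean0 (a : C(UI, ℝ)) : a ∈ Cmean0 ↔ intC a = 0 := Iff.rfl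

lemma isClosed_Cmean0 : IsClosed (Cmean0 : Set C(UI, ℝ)) := by
  have : (Cmean0 : Set C(UI, ℝ)) = intC ⁻¹' {0} := by
    ext a; exact mem_Cmean0 a
  rw [this]
  exact isClosed_singleton.preimage intC.continuous

instance completeCmean0 : CompleteSpace Cmean0 := isClosed_Cmean0.completeSpace_coe

/-- the primitive as a continuous function. -/
def primC (a : C(UI, ℝ)) : C(UI, ℝ) where
  toFun x := intL x a - x * intL 1 a
  continuous_toFun := by
    have h : Continuous fun x : ℝ => ∫ t in (0:ℝ)..x, ext01 a t :=
      intervalIntegral.continuous_primitive (fun x y => ext01_ii a x y) 0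
    have h2 : Continuous fun x : UI => intL (x:ℝ) a := h.comp continuous_subtype_val
    exact h2.sub (continuous_subtype_val.mul continuous_const)

lemma primC_apply (a : C(UI, ℝ)) (x : UI) : primC a x = intL x a - x * intL 1 a := rfl

/-- mean-zero primitive as a linear map. -/
def primL : C(UI, ℝ) →ₗ[ℝ] C(UI, ℝ) where
  toFun a := primC a - ContinuousMap.const UI (intL 1 (primC a))
  map_add' a b := by
    have h : primC (a + b) = primC a + primC b := by
      ext x; simp only [primC_apply, map_add, ContinuousMap.add_apply]; ring
    rw [h, map_add]
    ext x; simp; ring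
  map_smul' c a := by
    have h : primC (c • a) = c • primC a := by
      ext x; simp only [primC_apply, map_smul, ContinuousMap.smul_apply, smul_eq_mul]; ring
    rw [h, map_smul]
    ext x; simp; ring

lemma primL_apply (a : C(UI, ℝ)) :
    primL a = primC a - ContinuousMap.const UI (intL 1 (primC a)) := rfl

lemma primC_le (a : C(UI, ℝ)) : ‖primC a‖ ≤ 2 * ‖a‖ := by
  rw [ContinuousMap.norm_le _ (by positivity)]
  intro x
  rw [primC_apply]
  have h1 := intL_le x x.2 a
  have h2 := intL_le 1 (by simp) a
  have h3 : ‖(x:ℝ) * intL 1 a‖ ≤ 1 * (1 * ‖a‖) := by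
    rw [norm_mul]
    refine mul_le_mul ?_ h2 (norm_nonneg _) zero_le_one
    rw [Real.norm_of_nonneg x.2.1]; exact x.2.2
  have := norm_sub_le (intL x a) ((x:ℝ) * intL 1 a)
  linarith

lemma primL_le (a : C(UI, ℝ)) : ‖primL a‖ ≤ 4 * ‖a‖ := by
  rw [ContinuousMap.norm_le _ (by positivity)]
  intro x
  rw [primL_apply]
  have h1 := (primC a).norm_coe_le_norm x
  have h2 := intL_le 1 (by simp) (primC a)
  have h3 := primC_le a
  have := norm_sub_le (primC a x) (intL 1 (primC a))
  simp only [ContinuousMap.sub_apply, ContinuousMap.const_apply]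
  linarith

lemma primL_mem (a : C(UI, ℝ)) : primL a ∈ Cmean0 := by
  rw [mem_Cmean0, intC_apply, primL_apply, map_sub, intL_const, sub_self]

/-- mean-zero primitive as a continuous linear map into `Cmean0`. -/
def primM : C(UI, ℝ) →L[ℝ] Cmean0 :=
  (primL.codRestrict Cmean0 primL_mem).mkContinuous 4 primL_le

lemma primM_apply (a : C(UI, ℝ)) : (primM a : C(UI, ℝ)) = primL a := rfl

/-- the quadratic expression. -/
def quadF (p : Cmean0 × C(UI, ℝ)) : C(UI, ℝ) :=
  (1/2 : ℝ) • ((p.1 : C(UI, ℝ)) * (p.1 : C(UI, ℝ))) + (p.1 : C(UI, ℝ)) * p.2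

lemma gfun_eq (φ : Cmean0) (N : C(UI, ℝ)) : gfun φ N = ext01 (quadF (φ, N)) := by
  funext t
  simp [gfun, ext01, quadF, pow_two]

lemma DeltaF_eq (φ : Cmean0) (N : C(UI, ℝ)) (x : UI) :
    DeltaF φ N x = (primM (quadF (φ, N)) : C(UI, ℝ)) x := by
  rw [primM_apply, primL_apply]
  simp only [ContinuousMap.sub_apply, ContinuousMap.const_apply, primC_apply, DeltaF]
  have h : ∫ s in (0:ℝ)..1, primG φ N s = intL 1 (primC (quadF (φ, N))) := by
    rw [intL_apply]
    apply intervalIntegral.integral_congr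
    intro t ht
    rw [Set.uIcc_of_le zero_le_one] at ht
    simp only [ext01, Set.projIcc_of_mem zero_le_one ht, primC_apply, primG, gfun_eq, intL_apply]
  rw [h]
  simp only [primG, gfun_eq, intL_apply]

section generic

variable {E A : Type*} [NormedAddCommGroup E] [NormedSpace ℝ E]
  [NormedCommRing A] [NormedAlgebra ℝ A]

/-- the quadratic expression. -/
def GQ (j : E →L[ℝ] A) (p : E × A) : A :=
  (1/2 : ℝ) • (j p.1 * j p.1) + j p.1 * p.2

/-- the map `T`. -/
def GTF (j : E →L[ℝ] A) (M : A →L[ℝ] E) (p : E × A) : E := p.1 - M ((GQ j) p)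

lemma quadF_contDiff (j : E →L[ℝ] A) : ContDiff ℝ 1 (GQ j) := by
  have h : ContDiff ℝ 1 (fun p : E × A => j p.1) :=
    j.contDiff.comp contDiff_fst
  exact ((h.mul h).const_smul _).add (h.mul contDiff_snd)

lemma TF_contDiff (j : E →L[ℝ] A) (M : A →L[ℝ] E) : ContDiff ℝ 1 (GTF j M) :=
  contDiff_fst.sub (M.contDiff.comp (quadF_contDiff j))

lemma quadF_deriv (j : E →L[ℝ] A) : HasFDerivAt (GQ j) (0 : E × A →L[ℝ] A) 0 := by
  have h : HasFDerivAt (fun p : E × A => j p.1)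
      (j.comp (ContinuousLinearMap.fst ℝ E A)) 0 :=
    (j.comp (ContinuousLinearMap.fst ℝ E A)).hasFDerivAt
  have h2 : HasFDerivAt (fun p : E × A => p.2)
      (ContinuousLinearMap.snd ℝ E A) 0 := hasFDerivAt_snd
  have := ((h.mul h).const_smul (1/2:ℝ)).add (h.mul h2)
  refine this.congr_fderiv ?_
  refine ContinuousLinearMap.ext fun v => ?_
  simp

lemma TF_deriv (j : E →L[ℝ] A) (M : A →L[ℝ] E) : HasFDerivAt (GTF j M) (ContinuousLinearMap.fst ℝ E A) 0 := by
  have h := (hasFDerivAt_fst (𝕜 := ℝ) (p := (0 : E × A))).sub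
    (M.hasFDerivAt.comp (0 : E × A) (quadF_deriv j))
  refine h.congr_fderiv ?_
  simp

lemma TF_zero (j : E →L[ℝ] A) (M : A →L[ℝ] E) (N : A) : (GTF j M) (0, N) = 0 := by
  simp [GTF, GQ]

lemma exists_eps (j : E →L[ℝ] A) (M : A →L[ℝ] E) [CompleteSpace E] : ∃ ε : ℝ, 0 < ε ∧ ∀ N : A, ‖N‖ < ε →
    ∃ e : E ≃L[ℝ] E,
      HasFDerivAt (fun φ => (GTF j M) (φ, N)) (e : E →L[ℝ] E) 0 := by
  let F : A → (E →L[ℝ] E) := fun N =>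
    (fderiv ℝ (GTF j M) (0, N)).comp (ContinuousLinearMap.inl ℝ E A)
  have hF : Continuous F := by
    have h1 : Continuous (fderiv ℝ (GTF j M)) := (TF_contDiff j M).continuous_fderiv one_ne_zero
    have h2 : Continuous fun N : A => fderiv ℝ (GTF j M) ((0 : E), N) :=
      h1.comp (by fun_prop)
    exact h2.clm_comp continuous_const
  have hF0 : F 0 = (ContinuousLinearEquiv.refl ℝ E : E →L[ℝ] E) := by
    have h0 : fderiv ℝ (GTF j M) ((0 : E), (0 : A)) = _ := (TF_deriv j M).fderiv
    ext1 v
    simp [F, h0]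
  have hn : ∀ᶠ N in 𝓝 (0 : A),
      F N ∈ Set.range ((↑) : (E ≃L[ℝ] E) → (E →L[ℝ] E)) := by
    apply hF.continuousAt.eventually_mem
    rw [hF0]
    exact ContinuousLinearEquiv.nhds _
  obtain ⟨ε, hε, H⟩ := Metric.eventually_nhds_iff.1 hn
  refine ⟨ε, hε, fun N hN => ?_⟩
  obtain ⟨e, he⟩ := H (y := N) (by simpa using hN)
  refine ⟨e, ?_⟩
  rw [he]
  have h1 : HasFDerivAt (GTF j M) (fderiv ℝ (GTF j M) ((0 : E), N)) ((0 : E), N) :=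
    ((TF_contDiff j M).differentiable one_ne_zero _).hasFDerivAt
  exact HasFDerivAt.comp (g := GTF j M) (f := fun e : E => (e, N)) (0 : E) h1
    (hasFDerivAt_prodMk_left (𝕜 := ℝ) (0 : E) N)

lemma gen_main (j : E →L[ℝ] A) (M : A →L[ℝ] E) [CompleteSpace E] : ∃ ε : ℝ, 0 < ε ∧ ∀ N : A, ‖N‖ < ε →
        ∃ U V : Set E, IsOpen U ∧ (0 : E) ∈ U ∧ IsOpen V ∧ (0 : E) ∈ V ∧
          (fun φ => (GTF j M) (φ, N)) '' U = V ∧ Set.InjOn (fun φ => (GTF j M) (φ, N)) U ∧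
          ∃ Ti : E → E, ContDiffOn ℝ 1 Ti V ∧
            (∀ φ ∈ U, Ti ((GTF j M) (φ, N)) = φ) ∧ ∀ ψ ∈ V, (GTF j M) (Ti ψ, N) = ψ := by
  obtain ⟨ε, hε, H⟩ := exists_eps j M
  refine ⟨ε, hε, fun N hN => ?_⟩
  obtain ⟨e, he⟩ := H N hN
  have hC : ContDiff ℝ 1 (fun φ : E => (GTF j M) (φ, N)) :=
    (TF_contDiff j M).comp (contDiff_id.prodMk contDiff_const)
  have hCA : ContDiffAt ℝ 1 (fun φ : E => (GTF j M) (φ, N)) 0 := hC.contDiffAt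
  let Φ := hCA.toOpenPartialHomeomorph _ he one_ne_zero
  have hΦ : ∀ φ, Φ φ = (GTF j M) (φ, N) := fun φ => rfl
  have h0 : (0 : E) ∈ Φ.source := hCA.mem_toOpenPartialHomeomorph_source he one_ne_zero
  have hΦ0 : Φ 0 = 0 := by rw [hΦ, TF_zero j M]
  have h0t : (0 : E) ∈ Φ.target := by
    have := Φ.map_source h0
    rwa [hΦ0] at this
  have hs0 : Φ.symm 0 = 0 := by
    have := Φ.left_inv h0
    rwa [hΦ0] at this
  have hsymm : ContDiffAt ℝ 1 Φ.symm 0 := by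
    refine Φ.contDiffAt_symm h0t (f₀' := e) ?_ ?_
    · rw [hs0]; exact he
    · rw [hs0]; exact hCA
  obtain ⟨u, hu, hcu⟩ := hsymm.contDiffOn le_rfl (by simp)
  obtain ⟨w, hwu, hwo, hw0⟩ := mem_nhds_iff.1 hu
  refine ⟨Φ.source ∩ Φ ⁻¹' (w ∩ Φ.target), w ∩ Φ.target,
    Φ.isOpen_inter_preimage (hwo.inter Φ.open_target), ⟨h0, ?_⟩, hwo.inter Φ.open_target,
    ⟨hw0, h0t⟩, ?_, ?_, Φ.symm, hcu.mono (fun x hx => hwu hx.1), ?_, ?_⟩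
  · rw [Set.mem_preimage, hΦ0]; exact ⟨hw0, h0t⟩
  · ext y
    constructor
    · rintro ⟨x, hx, rfl⟩
      exact hx.2
    · rintro hy
      refine ⟨Φ.symm y, ⟨Φ.map_target hy.2, ?_⟩, Φ.right_inv hy.2⟩
      rw [Set.mem_preimage, Φ.right_inv hy.2]; exact hy
  · exact Φ.injOn.mono Set.inter_subset_left
  · intro φ hφ
    exact Φ.left_inv hφ.1
  · intro ψ hψ
    exact Φ.right_inv hψ.2

end generic

/-- the map `𝒯(φ,N) = φ - Δφ` on `C⁰([0,1],0) × C([0,1])` is `C¹`, its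
differential at `(0,0)` is `(δφ, δN) ↦ δφ`, and for every `N` close enough to `0` the map
`φ ↦ 𝒯(φ,N)` is a `C¹` diffeomorphism between neighbourhoods of `0` in `C⁰([0,1],0)`. -/
theorem stmt14 :
    ∃ T : (Cmean0 × C(UI, ℝ)) → Cmean0,
      (∀ (φ : Cmean0) (N : C(UI, ℝ)) (x : UI),
        ((T (φ, N) : C(UI, ℝ)) x = (φ : C(UI, ℝ)) x - DeltaF (φ : C(UI, ℝ)) N (x : ℝ))) ∧
      ContDiff ℝ 1 T ∧
      HasFDerivAt T (ContinuousLinearMap.fst ℝ Cmean0 C(UI, ℝ)) 0 ∧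
      ∃ ε : ℝ, 0 < ε ∧ ∀ N : C(UI, ℝ), ‖N‖ < ε →
        ∃ U V : Set Cmean0, IsOpen U ∧ (0 : Cmean0) ∈ U ∧ IsOpen V ∧ (0 : Cmean0) ∈ V ∧
          (fun φ => T (φ, N)) '' U = V ∧ Set.InjOn (fun φ => T (φ, N)) U ∧
          ∃ Ti : Cmean0 → Cmean0, ContDiffOn ℝ 1 Ti V ∧
            (∀ φ ∈ U, Ti (T (φ, N)) = φ) ∧ ∀ ψ ∈ V, T (Ti ψ, N) = ψ := by
  refine ⟨GTF Cmean0.subtypeL primM, fun φ N x => ?_, TF_contDiff _ _, TF_deriv _ _, gen_main _ _⟩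
  rw [DeltaF_eq]; rfl

end
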